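/- arXiv:0903.2349 — 6 statements merged into one kernel-verified Lean document; each statement's English description precedes it below -/
import Mathlib

section
/- Let P and Q be commutative monoids and let φ : P → Q be a monoid homomorphism satisfying the following integrality condition: for all p₁, p₂ ∈ P and q₁, q₂ ∈ Q with φ(p₁)·q₁ = φ(p₂)·q₂, there exist p₃, p₄ ∈ P and q ∈ Q such that q₁ = φ(p₃)·q, q₂ = φ(p₄)·q and p₁·p₃ = p₂·p₄. Let F' be a face of Q and let F = φ⁻¹(F'). Then F is a face of P and the restricted homomorphism φ|F : F → F' satisfies the same integrality condition, with p₁, p₂, p₃, p₄ ranging over F and q₁, q₂, q ranging over F'. -/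
/-- The preimage of a face under an "integral" morphism of commutative
monoids is a face, and the restriction of the morphism to the faces again satisfies
the integrality condition. -/
theorem stmt_0 {P Q : Type*} [CommMonoid P] [CommMonoid Q] (φ : P →* Q)
    (hint : ∀ p₁ p₂ : P, ∀ q₁ q₂ : Q, φ p₁ * q₁ = φ p₂ * q₂ →
      ∃ (p₃ p₄ : P) (q : Q), q₁ = φ p₃ * q ∧ q₂ = φ p₄ * q ∧ p₁ * p₃ = p₂ * p₄)
    (F' : Submonoid Q) (hF' : ∀ x y : Q, x * y ∈ F' → x ∈ F' ∧ y ∈ F') :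
    (∀ x y : P, x * y ∈ F'.comap φ → x ∈ F'.comap φ ∧ y ∈ F'.comap φ) ∧
    (∀ p₁ p₂ : P, p₁ ∈ F'.comap φ → p₂ ∈ F'.comap φ →
      ∀ q₁ q₂ : Q, q₁ ∈ F' → q₂ ∈ F' → φ p₁ * q₁ = φ p₂ * q₂ →
      ∃ (p₃ p₄ : P) (q : Q), p₃ ∈ F'.comap φ ∧ p₄ ∈ F'.comap φ ∧ q ∈ F' ∧
        q₁ = φ p₃ * q ∧ q₂ = φ p₄ * q ∧ p₁ * p₃ = p₂ * p₄) := by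
  refine ⟨fun x y h => hF' _ _ (by simpa using h), ?_⟩
  intro p₁ p₂ _ _ q₁ q₂ hq₁ hq₂ h
  -- The witnesses in `P` and `Q` work unchanged: they are factors of `q₁`, `q₂`, which lie in
  -- the given face of `Q`.
  obtain ⟨p₃, p₄, q, h₁, h₂, h₃⟩ := hint p₁ p₂ q₁ q₂ h
  have m₁ := hF' _ _ (h₁ ▸ hq₁)
  have m₂ := hF' _ _ (h₂ ▸ hq₂)
  exact ⟨p₃, p₄, q, m₁.1, m₂.1, m₁.2, h₁, h₂, h₃⟩
end

section
/- Let P and Q be commutative monoids and let φ : P → Q be a monoid homomorphism satisfying Tsuji's condition: for every prime number ℓ and all a ∈ P, b ∈ Q such that φ(a) divides bˡ in Q, there exists c ∈ P such that a divides cˡ in P and φ(c) divides b in Q. Let F' be a face of Q and let F = φ⁻¹(F'). Then the restricted homomorphism φ|F : F → F' satisfies Tsuji's condition with all divisibilities witnessed inside the faces: for every prime ℓ and all a ∈ F, b ∈ F' such that bˡ = φ(a)·d for some d ∈ F', there exists c ∈ F such that cˡ = a·e for some e ∈ F and b = φ(c)·d' for some d' ∈ F'. -/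
/-- The restriction of a morphism of commutative monoids satisfying
Tsuji's saturation condition to (the preimage of) a face again satisfies Tsuji's
condition, with all divisibilities witnessed inside the faces. -/
theorem stmt_1 {P Q : Type*} [CommMonoid P] [CommMonoid Q] (φ : P →* Q)
    (htsuji : ∀ ℓ : ℕ, ℓ.Prime → ∀ (a : P) (b : Q), φ a ∣ b ^ ℓ →
      ∃ c : P, a ∣ c ^ ℓ ∧ φ c ∣ b)
    (F' : Submonoid Q) (hF' : ∀ x y : Q, x * y ∈ F' → x ∈ F' ∧ y ∈ F') :
    ∀ ℓ : ℕ, ℓ.Prime → ∀ a ∈ F'.comap φ, ∀ b ∈ F',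
      (∃ d ∈ F', b ^ ℓ = φ a * d) →
      ∃ c ∈ F'.comap φ, (∃ e ∈ F'.comap φ, c ^ ℓ = a * e) ∧
        ∃ d' ∈ F', b = φ c * d' := by
  rintro ℓ hℓ a - b hb ⟨d, -, hd⟩
  obtain ⟨c, ⟨e, he⟩, d', hd'⟩ := htsuji ℓ hℓ a b ⟨d, hd⟩
  -- `φ c` and `d'` are factors of `b ∈ F'`, so both lie in the face.
  obtain ⟨hc, hd'F⟩ := hF' (φ c) d' (hd' ▸ hb)
  -- `φ e` is a factor of `φ c ^ ℓ ∈ F'`.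
  have hae : φ a * φ e ∈ F' := by
    rw [← map_mul, ← he, map_pow]
    exact pow_mem hc ℓ
  exact ⟨c, hc, ⟨e, (hF' _ _ hae).2, he⟩, d', hd'F, hd'⟩
end

section
/- Let Π be a group, C the category of Π-sets, G a finite group with a strict right action on C by equivalences, D' the associated descent category, F : D' → Set the composite of the forgetful functor D' → C with the forgetful functor C → Set, and Π' = Aut(F). Then the natural functor D' → Π'-Set, sending an object T to the set F(T) equipped with the tautological left Π'-action (γ acting by its component γ_T), is an equivalence of categories between D' and the category of all Π'-sets. -/
/-!
The fibre functor `F` is corepresentable: the forgetful functor from descent objects to `M`-sets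
has a left adjoint `A ↦ ∐ g, g^* A` (`free`), so `F` is corepresented by the free object `univ` on
the regular `M`-set, with a universal element `pt` (`exists_univ_hom`, `univ_hom_ext`).

Every endomorphism of `univ` is invertible. It sends `pt` into some summand `h^* (reg M)`, hence
maps the summand of `h⁻¹` to that of `1`, which is the regular `M`-set; as the former is not empty,
`pt` lies in the image (`exists_map_eq_pt`), so the endomorphism has a section. All endomorphisms
having sections, they are all invertible. By Yoneda, `Aut F` then acts simply transitively on
`F(univ)` (`av_injective`, `exists_av`).

Full faithfulness: an `Aut F`-equivariant map `F(T) → F(T')` composed with a map `univ ⟶ T` is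
equivariant on the torsor `F(univ)`, hence comes from a map `univ ⟶ T'` of descent objects; since
the maps `univ ⟶ T` are jointly surjective, the original map respects the descent data.

Essential surjectivity: an `Aut F`-set `X` is an `M`-set through `M → Aut F` (`rho`), and each `x`
in `X` gives a map `hatX x : univ ⟶ X` with `pt ↦ x`. The only possible descent datum on `X`
compatible with these maps is `x ↦ g^* (hatX x) (ψ_g pt)`, and it works (`exists_psiX`,
`exists_descentObj`).
-/

open CategoryTheory CategoryTheory.Limits

universe u

namespace Lepage

variable (M G : Type u) [Group M] [Group G]

/-- The category of `M`-sets, realized as the category of functors from the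
one-object groupoid associated with `M` to the category of sets. -/
abbrev PiSet := SingleObj M ⥤ Type u

variable (act : G → PiSet M ⥤ PiSet M)

/-- Objects of the descent category `D'` associated with a strict right action of `G`
on the category of `Π`-sets: pairs `(S, (ψ_g))` where `ψ_g : S ≅ g^* S` satisfy the
cocycle condition `ψ_{g'g} = g^*(ψ_{g'}) ∘ ψ_g`. -/
structure DescentObj (hmul : ∀ g g' : G, act (g' * g) = act g' ⋙ act g) :
    Type (u + 1) where
  S : PiSet M
  ψ : ∀ g : G, S ⟶ (act g).obj S
  iso : ∀ g : G, IsIso (ψ g)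
  cocycle : ∀ g g' : G, ψ (g' * g) = ψ g ≫ (act g).map (ψ g') ≫
    eqToHom (by rw [hmul g g']; rfl)

variable {M G act}
variable {hmul : ∀ g g' : G, act (g' * g) = act g' ⋙ act g}

/-- Morphisms of the descent category: morphisms `φ : S ⟶ S'` of `Π`-sets commuting
with the descent data. -/
@[ext]
structure DescentHom (T T' : DescentObj M G act hmul) : Type u where
  φ : T.S ⟶ T'.S
  comm : ∀ g : G, φ ≫ T'.ψ g = T.ψ g ≫ (act g).map φ

attribute [simp] DescentHom.comm

/-- The descent category `D'`. -/
instance : Category (DescentObj M G act hmul) where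
  Hom := DescentHom
  id T := ⟨𝟙 T.S, fun g => by simp⟩
  comp f g := ⟨f.φ ≫ g.φ, fun h => by
    rw [Category.assoc, g.comm, ← Category.assoc, f.comm, Category.assoc,
      ← Functor.map_comp]⟩

@[simp] lemma id_φ (T : DescentObj M G act hmul) : DescentHom.φ (𝟙 T) = 𝟙 T.S := rfl

@[simp] lemma comp_φ {T T' T'' : DescentObj M G act hmul} (f : T ⟶ T') (g : T' ⟶ T'') :
    (f ≫ g).φ = f.φ ≫ g.φ := rfl

variable (M G act hmul)

/-- The forgetful functor `F₀ : D' ⥤ C` from the descent category to the category of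
`Π`-sets. -/
def forgetDescent : DescentObj M G act hmul ⥤ PiSet M where
  obj T := T.S
  map f := f.φ

/-- The forgetful functor from the category of `M`-sets to sets, i.e. evaluation at
the unique object. -/
def fiber : PiSet M ⥤ Type u := (evaluation (SingleObj M) (Type u)).obj (SingleObj.star M)

/-- The fundamental functor `F : D' ⥤ Set`, the composite of the two forgetful
functors. -/
def Fib : DescentObj M G act hmul ⥤ Type u := forgetDescent M G act hmul ⋙ fiber M



variable {M G : Type u} [Group M] [Group G] {act : G → PiSet M ⥤ PiSet M}
variable {hmul : ∀ g g' : G, act (g' * g) = act g' ⋙ act g}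

variable (M G act hmul)

/-- The natural functor from the descent category to the category of
`Π' = Aut F`-sets, sending `T` to `F(T)` with the tautological `Π'`-action. -/
def toAutSet : DescentObj M G act hmul ⥤ (SingleObj (Aut (Fib M G act hmul)) ⥤ Type u) where
  obj T :=
    { obj := fun _ => (Fib M G act hmul).obj T
      map := fun γ => γ.hom.app T
      map_id := fun _ => rfl
      map_comp := fun _ _ => rfl }
  map f :=
    { app := fun _ => (Fib M G act hmul).map f
      naturality := fun _ _ γ => (γ.hom.naturality f).symm }
  map_id T := by
    apply NatTrans.ext
    funext x
    simp
  map_comp f g := by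
    apply NatTrans.ext
    funext x
    simp

section Aux

/-! ### Descent data -/

/-- Transport along an equality of functors is natural. -/
lemma map_comp_eqToHom {C D : Type*} [Category* C] [Category* D] {F F' : C ⥤ D} (h : F = F')
    {X Y : C} (f : X ⟶ Y) (e : F.obj Y = F'.obj Y) (e' : F.obj X = F'.obj X) :
    F.map f ≫ eqToHom e = eqToHom e' ≫ F'.map f := by
  subst h; simp

variable {M G : Type u} [Group M] [Group G] {act : G → PiSet M ⥤ PiSet M}

lemma act_mul_obj (hmul : ∀ g g' : G, act (g' * g) = act g' ⋙ act g) (g g' : G) (S : PiSet M) :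
    (act (g' * g)).obj S = (act g).obj ((act g').obj S) := by rw [hmul g g']; rfl

variable (hmul : ∀ g g' : G, act (g' * g) = act g' ⋙ act g)

lemma act_mul_map (g g' : G) {S S' : PiSet M} (f : S ⟶ S') :
    (act (g' * g)).map f ≫ eqToHom (act_mul_obj hmul g g' S') =
      eqToHom (act_mul_obj hmul g g' S) ≫ (act g).map ((act g').map f) :=
  map_comp_eqToHom (hmul g g') f _ _

lemma act_mul_map' (g g' : G) {S S' : PiSet M} (f : S ⟶ S') :
    (act g).map ((act g').map f) ≫ eqToHom (act_mul_obj hmul g g' S').symm =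
      eqToHom (act_mul_obj hmul g g' S).symm ≫ (act (g' * g)).map f :=
  map_comp_eqToHom (hmul g g').symm f _ _

lemma act_one_obj (hone : act 1 = 𝟭 (PiSet M)) (S : PiSet M) : (act 1).obj S = S := by
  rw [hone]; rfl

/-- A family satisfying the cocycle condition consists of isomorphisms as soon as its component
at `1` is one: `ψ (g⁻¹ * g)` being invertible makes every `ψ g` a split monomorphism and every
`(act g).map (ψ g⁻¹)` a split epimorphism. -/
lemma isIso_of_cocycle {S : PiSet M} (ψ : ∀ g : G, S ⟶ (act g).obj S) (h1 : IsIso (ψ 1))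
    (hψ : ∀ g g' : G, ψ (g' * g) = ψ g ≫ (act g).map (ψ g') ≫
      eqToHom (act_mul_obj hmul g g' S).symm) (g : G) : IsIso (ψ g) := by
  have hi : ∀ g : G, IsIso (ψ g ≫ (act g).map (ψ g⁻¹)) := fun g => by
    have h2 : IsIso (ψ (g⁻¹ * g)) := by rw [inv_mul_cancel]; exact h1
    rw [hψ g g⁻¹, ← Category.assoc] at h2
    exact IsIso.of_isIso_comp_right _ (eqToHom (act_mul_obj hmul g g⁻¹ S).symm)
  have hm : ∀ g : G, IsSplitMono (ψ g) := fun g =>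
    ⟨⟨⟨(act g).map (ψ g⁻¹) ≫ inv (ψ g ≫ (act g).map (ψ g⁻¹)), by
      rw [← Category.assoc, IsIso.hom_inv_id]⟩⟩⟩
  have := hi g
  have := hm g⁻¹
  have : IsSplitEpi ((act g).map (ψ g⁻¹)) :=
    ⟨⟨⟨inv (ψ g ≫ (act g).map (ψ g⁻¹)) ≫ ψ g, by
      rw [Category.assoc, IsIso.inv_hom_id]⟩⟩⟩
  have : IsIso ((act g).map (ψ g⁻¹)) := isIso_of_mono_of_isSplitEpi _
  exact IsIso.of_isIso_comp_right _ ((act g).map (ψ g⁻¹))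

/-! ### Free descent objects -/

variable (A : PiSet M)

/-- The underlying `M`-set `∐ g, g^* A` of the free descent object on `A`. -/
noncomputable abbrev freeS (act : G → PiSet M ⥤ PiSet M) (A : PiSet M) : PiSet M :=
  ∐ fun g : G => (act g).obj A

/-- The inclusion of the summand `g^* A`. -/
noncomputable abbrev freeι (act : G → PiSet M ⥤ PiSet M) (A : PiSet M) (g : G) :
    (act g).obj A ⟶ freeS act A :=
  Sigma.ι (fun g : G => (act g).obj A) g

lemma freeι_congr {I : Type u} {act : I → PiSet M ⥤ PiSet M} (A : PiSet M) {g k : I} (h : g = k) :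
    freeι act A g = eqToHom (by rw [h]) ≫ freeι act A k := by
  subst h; simp

/-- The descent datum of the free descent object: it identifies the summand `(k * h)^* A` with
`h^* (k^* A)`. -/
noncomputable def freeψ (h : G) : freeS act A ⟶ (act h).obj (freeS act A) :=
  Sigma.desc fun g => eqToHom (by rw [← act_mul_obj hmul, inv_mul_cancel_right]) ≫
    (act h).map (freeι act A (g * h⁻¹))

lemma ι_freeψ (k h : G) : freeι act A (k * h) ≫ freeψ hmul A h =
    eqToHom (act_mul_obj hmul h k A) ≫ (act h).map (freeι act A k) := by
  rw [freeψ, Sigma.ι_desc, freeι_congr A (mul_inv_cancel_right k h)]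
  simp [eqToHom_map]

lemma freeψ_cocycle (g g' : G) : freeψ hmul A (g' * g) = freeψ hmul A g ≫
    (act g).map (freeψ hmul A g') ≫ eqToHom (act_mul_obj hmul g g' _).symm := by
  refine Sigma.hom_ext _ _ fun l => ?_
  obtain ⟨k, rfl⟩ : ∃ k, l = k * (g' * g) := ⟨l * (g' * g)⁻¹, by rw [inv_mul_cancel_right]⟩
  change freeι act A _ ≫ _ = freeι act A _ ≫ _
  rw [ι_freeψ, freeι_congr A (mul_assoc k g' g).symm, Category.assoc, ← Category.assoc (freeι _ _ _),
    ι_freeψ, Category.assoc, ← Category.assoc ((act g).map _) ((act g).map _), ← Functor.map_comp,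
    ι_freeψ, Functor.map_comp, Category.assoc, act_mul_map' hmul]
  simp [eqToHom_map]

lemma freeψ_one (hone : act 1 = 𝟭 (PiSet M)) :
    freeψ hmul A 1 = eqToHom (act_one_obj hone _).symm := by
  refine Sigma.hom_ext _ _ fun k => ?_
  change freeι act A _ ≫ _ = freeι act A _ ≫ _
  have h := map_comp_eqToHom hone.symm (freeι act A k) (act_one_obj hone _).symm
    (act_one_obj hone _).symm
  rw [Functor.id_map] at h
  rw [h]
  conv_lhs => rw [freeι_congr A (mul_one k).symm, Category.assoc, ι_freeψ]
  simp

/-- The free descent object on an `M`-set. -/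
noncomputable def free (hone : act 1 = 𝟭 (PiSet M)) : DescentObj M G act hmul where
  S := freeS act A
  ψ := freeψ hmul A
  iso := isIso_of_cocycle hmul _ (by rw [freeψ_one hmul A hone]; infer_instance)
    (freeψ_cocycle hmul A)
  cocycle := freeψ_cocycle hmul A

/-- The inclusion of the summand `g^* A` into the free descent object. -/
noncomputable def incl (hone : act 1 = 𝟭 (PiSet M)) (g : G) :
    (act g).obj A ⟶ (free hmul A hone).S :=
  freeι act A g

variable {A} in
lemma incl_hom_ext (hone : act 1 = 𝟭 (PiSet M)) {S : PiSet M} {f f' : (free hmul A hone).S ⟶ S}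
    (h : ∀ g, incl hmul A hone g ≫ f = incl hmul A hone g ≫ f') : f = f' :=
  Sigma.hom_ext _ _ h

variable {A} in
lemma exists_incl_comp (hone : act 1 = 𝟭 (PiSet M)) {S : PiSet M}
    (f : ∀ g, (act g).obj A ⟶ S) :
    ∃ φ : (free hmul A hone).S ⟶ S, ∀ g, incl hmul A hone g ≫ φ = f g :=
  ⟨Sigma.desc f, fun g => Sigma.ι_desc f g⟩

lemma incl_ψ (hone : act 1 = 𝟭 (PiSet M)) (k h : G) :
    incl hmul A hone (k * h) ≫ (free hmul A hone).ψ h =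
      eqToHom (act_mul_obj hmul h k A) ≫ (act h).map (incl hmul A hone k) :=
  ι_freeψ hmul A k h

lemma incl_congr (hone : act 1 = 𝟭 (PiSet M)) {g k : G} (h : g = k) :
    incl hmul A hone g = eqToHom (by rw [h]) ≫ incl hmul A hone k :=
  freeι_congr A h

/-- Every element of the free descent object lies in one of the summands. -/
lemma exists_incl_apply (hone : act 1 = 𝟭 (PiSet M))
    (x : (free hmul A hone).S.obj (SingleObj.star M)) :
    ∃ g a, (incl hmul A hone g).app (SingleObj.star M) a = x := by
  obtain ⟨⟨g⟩, a, ha⟩ := Types.jointly_surjective_of_isColimit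
    (isColimitOfPreserves ((evaluation (SingleObj M) (Type u)).obj (SingleObj.star M))
      (colimit.isColimit (Discrete.functor fun g : G => (act g).obj A))) x
  exact ⟨g, a, ha⟩

/-- The unit `A ⟶ ∐ g, g^* A` of the free descent object, the inclusion of the summand `g = 1`. -/
noncomputable def freeUnit (hone : act 1 = 𝟭 (PiSet M)) : A ⟶ (free hmul A hone).S :=
  eqToHom (act_one_obj hone A).symm ≫ incl hmul A hone 1

lemma incl_one (hone : act 1 = 𝟭 (PiSet M)) :
    incl hmul A hone 1 = eqToHom (act_one_obj hone A) ≫ freeUnit hmul A hone := by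
  simp [freeUnit]

variable {hmul}

/-- The component at `1` of a descent datum is the identity, up to the equality `1^* = id`. -/
lemma ψ_one (hone : act 1 = 𝟭 (PiSet M)) (T : DescentObj M G act hmul) :
    T.ψ 1 = eqToHom (act_one_obj hone T.S).symm := by
  have := T.iso 1
  have h2 : T.ψ (1 * 1) = T.ψ 1 ≫ eqToHom (by rw [one_mul]) := by
    have : ∀ k : G, ∀ h : k = 1, T.ψ k = T.ψ 1 ≫ eqToHom (by rw [h]) := by
      rintro k rfl; simp
    exact this _ (one_mul 1)
  have h := T.cocycle 1 1
  rw [h2, cancel_epi] at h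
  have h3 := map_comp_eqToHom hone (T.ψ 1) (act_one_obj hone _) (act_one_obj hone _)
  have h4 : (act 1).map (T.ψ 1) = eqToHom (congrArg _ (act_one_obj hone T.S).symm) := by
    rw [← cancel_mono (eqToHom (act_mul_obj hmul 1 1 T.S).symm), ← h]; simp
  rw [h4, Functor.id_map] at h3
  rw [← cancel_epi (eqToHom (act_one_obj hone T.S))]
  exact h3.symm.trans (by simp)

/-- A morphism out of the free object is determined on each summand by its restriction along the
unit. -/
lemma incl_comp (hone : act 1 = 𝟭 (PiSet M)) {T : DescentObj M G act hmul}
    (f : free hmul A hone ⟶ T) (g : G) :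
    incl hmul A hone (1 * g) ≫ f.φ ≫ T.ψ g = eqToHom (act_mul_obj hmul g 1 A) ≫
      (act g).map (eqToHom (act_one_obj hone A) ≫ freeUnit hmul A hone ≫ f.φ) := by
  rw [f.comm, ← Category.assoc, incl_ψ, Category.assoc, ← Functor.map_comp, incl_one hmul A hone,
    Category.assoc]

variable {A} in
lemma free_hom_ext (hone : act 1 = 𝟭 (PiSet M)) {T : DescentObj M G act hmul}
    {f f' : free hmul A hone ⟶ T}
    (h : freeUnit hmul A hone ≫ f.φ = freeUnit hmul A hone ≫ f'.φ) : f = f' := by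
  refine DescentHom.ext (incl_hom_ext hmul hone fun g => ?_)
  obtain ⟨k, rfl⟩ : ∃ k, g = 1 * k := ⟨g, (one_mul g).symm⟩
  have := T.iso k
  have h1 := incl_comp A hone f k
  rw [h, ← incl_comp A hone f' k, ← Category.assoc, ← Category.assoc, cancel_mono] at h1
  exact h1

variable {A} in
/-- Maps of `M`-sets `t : A ⟶ T.S` extend to the free object on `A`, by `(T.ψ g)⁻¹ ∘ g^* t` on the
summand `g^* A`. -/
lemma exists_freeLift (hone : act 1 = 𝟭 (PiSet M)) (T : DescentObj M G act hmul)
    (t : A ⟶ T.S) : ∃ f : free hmul A hone ⟶ T, freeUnit hmul A hone ≫ f.φ = t := by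
  have := T.iso
  obtain ⟨φ, hφ⟩ := exists_incl_comp hmul hone fun g => (act g).map t ≫ inv (T.ψ g)
  refine ⟨⟨φ, fun h => incl_hom_ext hmul hone fun l => ?_⟩, ?_⟩
  · obtain ⟨k, rfl⟩ : ∃ k, l = k * h := ⟨l * h⁻¹, by simp⟩
    rw [← Category.assoc, hφ, ← Category.assoc, incl_ψ, Category.assoc, Category.assoc,
      ← Functor.map_comp, hφ, Functor.map_comp, ← Category.assoc (eqToHom _),
      ← act_mul_map hmul, Category.assoc]
    congr 1
    rw [IsIso.inv_comp_eq, T.cocycle h k]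
    simp
  · have h := map_comp_eqToHom hone t (act_one_obj hone _) (act_one_obj hone _)
    have h1 : inv (T.ψ 1) = eqToHom (act_one_obj hone _) := by
      rw [IsIso.inv_eq_of_hom_inv_id]; rw [ψ_one hone]; simp
    dsimp only
    rw [freeUnit, Category.assoc, hφ, h1, h]
    simp

/-! ### The universal descent object -/

variable (M) in
/-- The regular `M`-set. -/
abbrev reg : PiSet M := coyoneda.obj (Opposite.op (SingleObj.star M))

lemma nonempty_full_reg {E : PiSet M ⥤ PiSet M} [E.Full] :
    Nonempty ((E.obj (reg M)).obj (SingleObj.star M)) := by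
  by_contra hne
  rw [not_nonempty_iff] at hne
  -- A map from an empty `E (reg M)` to `E ∅` would come from a map `reg M ⟶ ∅`.
  let Z : PiSet M := (Functor.const _).obj PEmpty
  let f : E.obj (reg M) ⟶ E.obj Z :=
    { app := fun _ => ↾fun x => (hne.false x).elim
      naturality := fun _ _ _ => by ext x; exact (hne.false x).elim }
  exact ((E.preimage f).app (SingleObj.star M) (𝟙 (SingleObj.star M))).elim

variable (hmul) in
/-- The free descent object on the regular `M`-set; it corepresents `Fib`. -/
noncomputable abbrev univ (hone : act 1 = 𝟭 (PiSet M)) : DescentObj M G act hmul :=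
  free hmul (reg M) hone

variable (hmul) in
/-- The universal element of the underlying set of `univ hmul hone`. -/
noncomputable def pt (hone : act 1 = 𝟭 (PiSet M)) :
    (univ hmul hone).S.obj (SingleObj.star M) :=
  coyonedaEquiv (freeUnit hmul (reg M) hone)

lemma univ_hom_ext (hone : act 1 = 𝟭 (PiSet M)) {T : DescentObj M G act hmul}
    {f f' : univ hmul hone ⟶ T}
    (h : f.φ.app (SingleObj.star M) (pt hmul hone) =
      f'.φ.app (SingleObj.star M) (pt hmul hone)) : f = f' :=
  free_hom_ext hone (coyonedaEquiv.injective h)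

lemma exists_univ_hom (hone : act 1 = 𝟭 (PiSet M)) (T : DescentObj M G act hmul)
    (t : T.S.obj (SingleObj.star M)) :
    ∃ f : univ hmul hone ⟶ T, f.φ.app (SingleObj.star M) (pt hmul hone) = t := by
  obtain ⟨f, hf⟩ := exists_freeLift hone T (coyonedaEquiv.symm t)
  refine ⟨f, ?_⟩
  rw [pt, ← coyonedaEquiv_comp, hf, Equiv.apply_symm_apply]

/-- Every endomorphism of the universal object has the universal element in its image. If
it sends `pt` into the summand `h^* (reg M)`, then it maps the summand of `h⁻¹`, which is not
empty, equivariantly into the transitive summand of `1`. -/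
lemma exists_map_eq_pt (hone : act 1 = 𝟭 (PiSet M)) (hequiv : ∀ g : G, (act g).IsEquivalence)
    (e : univ hmul hone ⟶ univ hmul hone) :
    ∃ y, e.φ.app (SingleObj.star M) y = pt hmul hone := by
  obtain ⟨h, a, ha⟩ := exists_incl_apply hmul (reg M) hone
    (e.φ.app (SingleObj.star M) (pt hmul hone))
  let b : reg M ⟶ (act h).obj (reg M) := coyonedaEquiv.symm a
  have hb : freeUnit hmul (reg M) hone ≫ e.φ = b ≫ incl hmul (reg M) hone h := by
    apply coyonedaEquiv.injective
    rw [coyonedaEquiv_comp b, Equiv.apply_symm_apply, ha]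
    rfl
  obtain ⟨w, hw⟩ : ∃ w : (act (1 * h⁻¹)).obj (reg M) ⟶ reg M,
      incl hmul (reg M) hone (1 * h⁻¹) ≫ e.φ = w ≫ freeUnit hmul (reg M) hone := by
    have h1 := incl_comp (reg M) hone e h⁻¹
    have h2 := incl_ψ hmul (reg M) hone h h⁻¹
    rw [← IsIso.inv_comp_eq] at h2
    rw [hb, Functor.map_comp, Functor.map_comp, ← h2, incl_congr hmul _ hone (mul_inv_cancel h),
      incl_one] at h1
    have := (univ hmul hone).iso h⁻¹
    simp only [← Category.assoc] at h1
    rw [cancel_mono] at h1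
    exact ⟨_, h1⟩
  have := hequiv (1 * h⁻¹)
  obtain ⟨z⟩ := nonempty_full_reg (E := act (1 * h⁻¹))
  let m : SingleObj.star M ⟶ SingleObj.star M := w.app (SingleObj.star M) z
  let y := (incl hmul (reg M) hone (1 * h⁻¹)).app (SingleObj.star M) z
  have hy : e.φ.app (SingleObj.star M) y = (univ hmul hone).S.map m (pt hmul hone) := by
    have h3 := ConcreteCategory.congr_hom (NatTrans.congr_app hw (SingleObj.star M)) z
    rw [pt, map_coyonedaEquiv]
    exact h3
  refine ⟨(univ hmul hone).S.map (inv m) y, ?_⟩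
  rw [NatTrans.naturality_apply, hy, ← Functor.map_comp_apply, IsIso.hom_inv_id,
    Functor.map_id_apply]

/-- Every endomorphism of the universal object is invertible: each has a section by
`exists_map_eq_pt`, and so has that section. -/
lemma exists_inverse (hone : act 1 = 𝟭 (PiSet M)) (hequiv : ∀ g : G, (act g).IsEquivalence)
    (e : univ hmul hone ⟶ univ hmul hone) :
    ∃ e' : univ hmul hone ⟶ univ hmul hone, e' ≫ e = 𝟙 _ ∧ e ≫ e' = 𝟙 _ := by
  have key : ∀ e : univ hmul hone ⟶ univ hmul hone,
      ∃ e' : univ hmul hone ⟶ univ hmul hone, e' ≫ e = 𝟙 _ := fun e => by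
    obtain ⟨y, hy⟩ := exists_map_eq_pt hone hequiv e
    obtain ⟨e', he'⟩ := exists_univ_hom hone _ y
    refine ⟨e', univ_hom_ext hone ?_⟩
    simp [he', hy]
  obtain ⟨s, hs⟩ := key e
  obtain ⟨t, ht⟩ := key s
  have hte : t = e := by
    rw [← Category.comp_id t, ← hs, ← Category.assoc, ht, Category.id_comp]
  exact ⟨s, hs, hte ▸ ht⟩

/-! ### The group `Aut F` and its action on the universal object -/

/-- The map `univ ⟶ T` sending the universal element to `t`. -/
noncomputable def hat (hone : act 1 = 𝟭 (PiSet M)) {T : DescentObj M G act hmul}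
    (t : T.S.obj (SingleObj.star M)) : univ hmul hone ⟶ T :=
  (exists_univ_hom hone T t).choose

@[simp]
lemma hat_pt (hone : act 1 = 𝟭 (PiSet M)) {T : DescentObj M G act hmul}
    (t : T.S.obj (SingleObj.star M)) :
    (hat hone t).φ.app (SingleObj.star M) (pt hmul hone) = t :=
  (exists_univ_hom hone T t).choose_spec

lemma hat_comp (hone : act 1 = 𝟭 (PiSet M)) {T T' : DescentObj M G act hmul}
    (t : T.S.obj (SingleObj.star M)) (f : T ⟶ T') :
    hat hone (f.φ.app (SingleObj.star M) t) = hat hone t ≫ f :=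
  univ_hom_ext hone (by simp)

lemma hat_self (hone : act 1 = 𝟭 (PiSet M)) :
    hat hone (pt hmul hone) = 𝟙 (univ hmul hone) :=
  univ_hom_ext hone (by simp)

/-- The endomorphism of the fibre functor given, through corepresentability, by precomposition
with an endomorphism of the universal object. -/
noncomputable def endFib (hone : act 1 = 𝟭 (PiSet M)) (e : univ hmul hone ⟶ univ hmul hone) :
    Fib M G act hmul ⟶ Fib M G act hmul where
  app T := ↾fun t : T.S.obj (SingleObj.star M) =>
    (e ≫ hat hone t).φ.app (SingleObj.star M) (pt hmul hone)
  naturality T T' f := by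
    ext (t : T.S.obj (SingleObj.star M))
    change (e ≫ hat hone (f.φ.app (SingleObj.star M) t)).φ.app (SingleObj.star M) (pt hmul hone) =
      f.φ.app (SingleObj.star M) ((e ≫ hat hone t).φ.app (SingleObj.star M) (pt hmul hone))
    rw [hat_comp]
    simp

lemma endFib_comp (hone : act 1 = 𝟭 (PiSet M)) (e e' : univ hmul hone ⟶ univ hmul hone)
    (h : e' ≫ e = 𝟙 _) : endFib hone e ≫ endFib hone e' = 𝟙 _ := by
  ext T (t : T.S.obj (SingleObj.star M))
  change (e' ≫ hat hone ((e ≫ hat hone t).φ.app (SingleObj.star M) (pt hmul hone))).φ.app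
    (SingleObj.star M) (pt hmul hone) = t
  rw [hat_comp hone _ (e ≫ hat hone t)]
  rw [hat_self, Category.id_comp, ← Category.assoc, h, Category.id_comp, hat_pt]

/-- The component of a natural automorphism of `Fib`, as a function on underlying sets. -/
def av (γ : Aut (Fib M G act hmul)) (T : DescentObj M G act hmul)
    (t : T.S.obj (SingleObj.star M)) : T.S.obj (SingleObj.star M) :=
  γ.hom.app T t

lemma av_naturality (γ : Aut (Fib M G act hmul)) {T T' : DescentObj M G act hmul} (f : T ⟶ T')
    (t : T.S.obj (SingleObj.star M)) :
    av γ T' (f.φ.app (SingleObj.star M) t) = f.φ.app (SingleObj.star M) (av γ T t) :=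
  ConcreteCategory.congr_hom (γ.hom.naturality f) t

lemma av_mul (γ δ : Aut (Fib M G act hmul)) (T : DescentObj M G act hmul)
    (t : T.S.obj (SingleObj.star M)) : av (γ * δ) T t = av γ T (av δ T t) := rfl

/-- `Aut F` acts freely on the universal element. -/
lemma av_injective (hone : act 1 = 𝟭 (PiSet M)) {γ δ : Aut (Fib M G act hmul)}
    (h : av γ _ (pt hmul hone) = av δ _ (pt hmul hone)) : γ = δ := by
  ext T (t : T.S.obj (SingleObj.star M))
  change av γ T t = av δ T t
  rw [← hat_pt hone t, av_naturality, av_naturality, h]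

/-- `Aut F` acts transitively on the fibre of the universal object. -/
lemma exists_av (hone : act 1 = 𝟭 (PiSet M)) (hequiv : ∀ g : G, (act g).IsEquivalence)
    (x : (univ hmul hone).S.obj (SingleObj.star M)) :
    ∃ γ : Aut (Fib M G act hmul), av γ _ (pt hmul hone) = x := by
  obtain ⟨e', h, h'⟩ := exists_inverse hone hequiv (hat hone x)
  refine ⟨⟨endFib hone (hat hone x), endFib hone e', endFib_comp hone _ _ h,
    endFib_comp hone _ _ h'⟩, ?_⟩
  change (hat hone x ≫ hat hone (pt hmul hone)).φ.app (SingleObj.star M) (pt hmul hone) = x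
  rw [hat_self, Category.comp_id, hat_pt]

variable (hmul) in
/-- The homomorphism `M → Aut F` given by the action of `M` on the underlying `M`-sets, as a functor
between one-object categories. -/
noncomputable def rho : SingleObj M ⥤ SingleObj (Aut (Fib M G act hmul)) where
  obj _ := SingleObj.star _
  map {x y} m :=
    { hom := { app := fun T => T.S.map m
               naturality := fun _ _ f => (f.φ.naturality m).symm }
      inv := { app := fun T => T.S.map (inv m)
               naturality := fun _ _ f => (f.φ.naturality (inv m)).symm }
      hom_inv_id := by
        ext T t
        change (T.S.map m ≫ T.S.map (inv m)) t = t
        rw [← Functor.map_comp, IsIso.hom_inv_id, CategoryTheory.Functor.map_id]; rfl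
      inv_hom_id := by
        ext T t
        change (T.S.map (inv m) ≫ T.S.map m) t = t
        rw [← Functor.map_comp, IsIso.inv_hom_id, CategoryTheory.Functor.map_id]; rfl }
  map_id x := by
    apply Aut.ext
    ext T t
    change T.S.map (𝟙 x) t = t
    rw [CategoryTheory.Functor.map_id]; rfl
  map_comp {x y z} m n := by
    apply Aut.ext
    ext T t
    change T.S.map (m ≫ n) t = (T.S.map m ≫ T.S.map n) t
    rw [Functor.map_comp]

lemma piSet_hom_ext {S S' : PiSet M} {a b : S ⟶ S'}
    (h : ∀ x : S.obj (SingleObj.star M),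
      a.app (SingleObj.star M) x = b.app (SingleObj.star M) x) : a = b := by
  ext _ x
  exact h x

/-! ### Full faithfulness -/

lemma toAutSet_faithful : (toAutSet M G act hmul).Faithful where
  map_injective {T T'} f f' h := by
    refine DescentHom.ext (piSet_hom_ext fun x => ?_)
    exact ConcreteCategory.congr_hom (NatTrans.congr_app h (SingleObj.star _)) x

/-- An `Aut F`-equivariant map commutes with the descent data: this may be tested after
composition with the maps `univ ⟶ T`, and the composites again come from the descent category
because `univ` is a transitive `Aut F`-set. -/
lemma toAutSet_full (hone : act 1 = 𝟭 (PiSet M)) (hequiv : ∀ g : G, (act g).IsEquivalence) :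
    (toAutSet M G act hmul).Full where
  map_surjective {T T'} f := by
    let φ : T.S ⟶ T'.S :=
      { app := fun _ => f.app (SingleObj.star _)
        naturality := fun _ _ m => f.naturality ((rho hmul).map m) }
    have hφ : ∀ (γ : Aut (Fib M G act hmul)) (t : T.S.obj (SingleObj.star M)),
        φ.app (SingleObj.star M) (av γ T t) = av γ T' (φ.app (SingleObj.star M) t) :=
      fun γ t => ConcreteCategory.congr_hom
        (f.naturality (X := SingleObj.star _) (Y := SingleObj.star _) γ) t
    have hc : ∀ t : T.S.obj (SingleObj.star M),
        (hat hone t).φ ≫ φ = (hat hone (φ.app (SingleObj.star M) t)).φ := fun t => by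
      refine piSet_hom_ext fun y => ?_
      obtain ⟨γ, rfl⟩ := exists_av hone hequiv y
      rw [NatTrans.comp_app_apply, ← av_naturality, ← av_naturality, hφ, hat_pt, hat_pt]
    refine ⟨⟨φ, fun g => piSet_hom_ext fun t => ?_⟩, ?_⟩
    · have h : (hat hone t).φ ≫ φ ≫ T'.ψ g = (hat hone t).φ ≫ T.ψ g ≫ (act g).map φ := by
        rw [← Category.assoc, hc, DescentHom.comm, ← hc, ← Category.assoc, DescentHom.comm,
          Functor.map_comp, Category.assoc]
      have hpt := ConcreteCategory.congr_hom
        (NatTrans.congr_app h (SingleObj.star M)) (pt hmul hone)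
      rwa [NatTrans.comp_app_apply (hat hone t).φ, NatTrans.comp_app_apply (hat hone t).φ,
        hat_pt] at hpt
    · ext _ x
      rfl

/-! ### Essential surjectivity -/

section EssSurj

variable (hone : act 1 = 𝟭 (PiSet M)) (hequiv : ∀ g : G, (act g).IsEquivalence)

/-- The unique element of `Aut F` moving the universal element to `y`. -/
noncomputable def coord (y : (univ hmul hone).S.obj (SingleObj.star M)) :
    Aut (Fib M G act hmul) :=
  (exists_av hone hequiv y).choose

lemma av_coord (y : (univ hmul hone).S.obj (SingleObj.star M)) :
    av (coord hone hequiv y) _ (pt hmul hone) = y :=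
  (exists_av hone hequiv y).choose_spec

lemma coord_av (γ : Aut (Fib M G act hmul)) (y : (univ hmul hone).S.obj (SingleObj.star M)) :
    coord hone hequiv (av γ _ y) = γ * coord hone hequiv y :=
  av_injective hone (by rw [av_coord, av_mul, av_coord])

lemma coord_av_pt (γ : Aut (Fib M G act hmul)) :
    coord hone hequiv (av γ _ (pt hmul hone)) = γ :=
  av_injective hone (av_coord hone hequiv _)

variable (X : SingleObj (Aut (Fib M G act hmul)) ⥤ Type u)

/-- The action of `Aut F` on the underlying set of `X`. -/
def smulX (γ : Aut (Fib M G act hmul)) (x : X.obj (SingleObj.star _)) : X.obj (SingleObj.star _) :=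
  X.map (X := SingleObj.star _) (Y := SingleObj.star _) γ x

lemma smulX_mul (γ δ : Aut (Fib M G act hmul)) (x : X.obj (SingleObj.star _)) :
    smulX X (γ * δ) x = smulX X γ (smulX X δ x) :=
  Functor.map_comp_apply X (X := SingleObj.star _) (Y := SingleObj.star _)
    (Z := SingleObj.star _) δ γ x

lemma smulX_one (x : X.obj (SingleObj.star _)) : smulX X 1 x = x :=
  Functor.map_id_apply X (X := SingleObj.star _) x

/-- The `Aut F`-equivariant map `univ ⟶ X` sending the universal element to `x`, regarded as a
map of `M`-sets. -/
noncomputable def hatX (x : X.obj (SingleObj.star _)) : (univ hmul hone).S ⟶ rho hmul ⋙ X where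
  app _ := ↾fun y => smulX X (coord hone hequiv y) x
  naturality _ _ m := by
    ext y
    change smulX X (coord hone hequiv (av ((rho hmul).map m) _ y)) x =
      smulX X ((rho hmul).map m) (smulX X (coord hone hequiv y) x)
    rw [coord_av, smulX_mul]

lemma hatX_apply (x : X.obj (SingleObj.star _)) (y : (univ hmul hone).S.obj (SingleObj.star M)) :
    (hatX hone hequiv X x).app (SingleObj.star M) y = smulX X (coord hone hequiv y) x := rfl

lemma hatX_pt (x : (rho hmul ⋙ X).obj (SingleObj.star M)) :
    (hatX hone hequiv X x).app (SingleObj.star M) (pt hmul hone) = x := by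
  have h : coord hone hequiv (pt hmul hone) = 1 := coord_av_pt hone hequiv 1
  rw [hatX_apply, h]
  exact smulX_one X x

lemma hatX_hatX (x : X.obj (SingleObj.star _)) (y : (univ hmul hone).S.obj (SingleObj.star M)) :
    hatX hone hequiv X (smulX X (coord hone hequiv y) x) =
      (hat hone y).φ ≫ hatX hone hequiv X x := by
  refine piSet_hom_ext fun z => ?_
  obtain ⟨γ, rfl⟩ := exists_av hone hequiv z
  rw [NatTrans.comp_app_apply, hatX_apply, hatX_apply, ← av_naturality, hat_pt, coord_av_pt,
    coord_av, smulX_mul]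

/-- The maps `hatX x` are jointly epimorphic. -/
lemma hatX_epi {S : PiSet M} {a b : rho hmul ⋙ X ⟶ S}
    (h : ∀ x, hatX hone hequiv X x ≫ a = hatX hone hequiv X x ≫ b) : a = b := by
  refine piSet_hom_ext fun x => ?_
  have hpt := ConcreteCategory.congr_hom
    (NatTrans.congr_app (h x) (SingleObj.star M)) (pt hmul hone)
  rwa [NatTrans.comp_app_apply, NatTrans.comp_app_apply, hatX_pt] at hpt

/-- The descent datum on `X` for which all the maps `hatX x` commute with the descent data; this
forces its value at `x`. -/
lemma exists_psiX (g : G) : ∃ a : rho hmul ⋙ X ⟶ (act g).obj (rho hmul ⋙ X),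
    ∀ x, hatX hone hequiv X x ≫ a =
      (univ hmul hone).ψ g ≫ (act g).map (hatX hone hequiv X x) := by
  let a₀ : (rho hmul ⋙ X).obj (SingleObj.star M) →
      ((act g).obj (rho hmul ⋙ X)).obj (SingleObj.star M) := fun x =>
    ((univ hmul hone).ψ g ≫ (act g).map (hatX hone hequiv X x)).app (SingleObj.star M)
      (pt hmul hone)
  have ha : ∀ (x : (rho hmul ⋙ X).obj (SingleObj.star M)) y,
      a₀ ((hatX hone hequiv X x).app (SingleObj.star M) y) =
      ((univ hmul hone).ψ g ≫ (act g).map (hatX hone hequiv X x)).app (SingleObj.star M) y := by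
    intro x y
    have h : (univ hmul hone).ψ g ≫ (act g).map ((hat hone y).φ ≫ hatX hone hequiv X x) =
        (hat hone y).φ ≫ (univ hmul hone).ψ g ≫ (act g).map (hatX hone hequiv X x) := by
      rw [Functor.map_comp, ← Category.assoc, ← DescentHom.comm, Category.assoc]
    change ((univ hmul hone).ψ g ≫ (act g).map (hatX hone hequiv X
      (smulX X (coord hone hequiv y) x))).app (SingleObj.star M) (pt hmul hone) = _
    rw [hatX_hatX, h, NatTrans.comp_app_apply (hat hone y).φ, hat_pt]
  refine ⟨{ app := fun _ => ↾a₀, naturality := fun s t m => ?_ }, fun x => piSet_hom_ext (ha x)⟩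
  ext (x : (rho hmul ⋙ X).obj (SingleObj.star M))
  obtain rfl : s = SingleObj.star M := rfl
  obtain rfl : t = SingleObj.star M := rfl
  change a₀ ((rho hmul ⋙ X).map m x) = ((act g).obj (rho hmul ⋙ X)).map m (a₀ x)
  conv_lhs => rw [← hatX_pt hone hequiv X x]
  rw [← NatTrans.naturality_apply, ha, NatTrans.naturality_apply]

/-- The restriction of `X` along `M → Aut F` carries a descent datum for which every `hatX x`
is a morphism of descent objects. Its cocycle condition holds because the maps `hatX x` are jointly
epimorphic and `univ` satisfies it. -/
lemma exists_descentObj : ∃ T : DescentObj M G act hmul, ∃ h : T.S = rho hmul ⋙ X,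
    ∀ x, ∃ f : univ hmul hone ⟶ T, f.φ = hatX hone hequiv X x ≫ eqToHom h.symm := by
  choose ψ hψ using exists_psiX hone hequiv X
  have hc : ∀ g g' : G, ψ (g' * g) = ψ g ≫ (act g).map (ψ g') ≫
      eqToHom (act_mul_obj hmul g g' _).symm := fun g g' => by
    refine hatX_epi hone hequiv X fun x => ?_
    rw [hψ, ← Category.assoc, hψ, Category.assoc, ← Category.assoc ((act g).map _),
      ← Functor.map_comp, hψ, Functor.map_comp, Category.assoc, act_mul_map' hmul,
      (univ hmul hone).cocycle]
    simp only [Category.assoc]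
  have h1 : ψ 1 = eqToHom (act_one_obj hone _).symm := by
    refine hatX_epi hone hequiv X fun x => ?_
    rw [hψ, ψ_one hone]
    exact (map_comp_eqToHom hone.symm _ _ _).symm
  refine ⟨⟨rho hmul ⋙ X, ψ, isIso_of_cocycle hmul ψ (by rw [h1]; infer_instance) hc, hc⟩, rfl,
    fun x => ⟨⟨hatX hone hequiv X x, fun g => hψ g x⟩, by simp⟩⟩

end EssSurj

/-- The natural `Aut F`-action on the fibre of the object of `exists_descentObj` is the given one:
naturality along `hatX x` reduces this to the action on the universal element. -/
lemma toAutSet_essSurj (hone : act 1 = 𝟭 (PiSet M))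
    (hequiv : ∀ g : G, (act g).IsEquivalence) : (toAutSet M G act hmul).EssSurj where
  mem_essImage X := by
    obtain ⟨⟨S, ψ, hi, hc⟩, h, hf⟩ := exists_descentObj hone hequiv X
    dsimp only at h
    subst h
    let T : DescentObj M G act hmul := ⟨rho hmul ⋙ X, ψ, hi, hc⟩
    have hav : ∀ (γ : Aut (Fib M G act hmul)) (x : T.S.obj (SingleObj.star M)),
        av γ T x = smulX X γ x := fun γ x => by
      obtain ⟨f, hfx⟩ := hf x
      have hfx' : f.φ = hatX hone hequiv X x := by rw [hfx]; simp
      have hn := av_naturality γ f (pt hmul hone)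
      rw [hfx', hatX_pt, hatX_apply, coord_av_pt] at hn
      exact hn
    refine ⟨T, ⟨NatIso.ofComponents (fun _ => Iso.refl _) fun γ => ?_⟩⟩
    ext x
    exact hav γ x

end Aux

/-- the natural functor from the descent category `D'` to the category
of `Π' = Aut F`-sets, `T ↦ F(T)` with the tautological action, is an equivalence of
categories. -/
theorem stmt_2 [Finite G] (hone : act 1 = 𝟭 (PiSet M))
    (hequiv : ∀ g : G, (act g).IsEquivalence) :
    (toAutSet M G act hmul).IsEquivalence := by
  have := toAutSet_faithful (hmul := hmul)
  have := toAutSet_full (hmul := hmul) hone hequiv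
  have := toAutSet_essSurj (hmul := hmul) hone hequiv
  exact { }

end Lepage
end

section
/- Let k be a field, B a finitely generated abelian group (written additively), A a subgroup of B, and n a positive integer such that the image of n in k is nonzero and n•b ∈ A for every b ∈ B. Then the group algebra k[B] (the monoid algebra AddMonoidAlgebra k B), regarded as an algebra over k[A] via the ring homomorphism induced by the inclusion A ⊆ B, is an étale k[A]-algebra (i.e. formally étale and of finite presentation). -/
universe u

/-!
Formal étaleness is checked by infinitesimal lifting. Let `S` be a `k[A]`-algebra, `I ⊆ S` an ideal
of square zero and `f : k[B] → S ⧸ I` a `k[A]`-algebra map. A lift `g` of `f` must send the monomial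
of `b ∈ B` to an element `s` lying over the image of that monomial under `f` and satisfying
`s ^ n = α (n • b)`, where `α (n • b)` is the image in `S` of the monomial of `n • b ∈ A`. As `n` and
`α (n • b)` are units of `S`, exactly one such `s` exists (Hensel's lemma for `X ^ n - a`:
`eq_of_pow_eq_of_sub_mem` and `exists_pow_eq_of_sub_mem`). Existence defines `g` on monomials, and
uniqueness shows that `g` is multiplicative, restricts to `α` on `A`, and is the only lift.

Finite presentation holds because `A` is finitely generated, so that `k[A]` is Noetherian, and
`k[B]` is of finite type already over `k`.
-/

lemma add_pow_eq_of_sq_eq_zero {S : Type*} [CommRing S] (x h : S) (hh : h ^ 2 = 0) (n : ℕ) :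
    (x + h) ^ n = x ^ n + n * x ^ (n - 1) * h := by
  obtain ⟨c, hc⟩ := Polynomial.powAddExpansion x h n
  rw [hc, hh, mul_zero, add_zero]

lemma sq_eq_zero_of_mem {S : Type*} [CommRing S] {I : Ideal S} (hI : I ^ 2 = ⊥) {h : S}
    (hh : h ∈ I) : h ^ 2 = 0 := by
  have := Ideal.pow_mem_pow hh 2
  rwa [hI, Ideal.mem_bot] at this

/-- Two `n`-th roots of a unit that agree modulo a square-zero ideal are equal, if `n` is
invertible. -/
lemma eq_of_pow_eq_of_sub_mem {S : Type*} [CommRing S] {I : Ideal S} (hI : I ^ 2 = ⊥)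
    {n : ℕ} (hn : 0 < n) (hnS : IsUnit (n : S)) {s t : S} (ht : IsUnit (t ^ n))
    (hst : s ^ n = t ^ n) (hmem : s - t ∈ I) : s = t := by
  have htu : IsUnit t := (isUnit_pow_iff hn.ne').mp ht
  have h1 := add_pow_eq_of_sq_eq_zero t (s - t) (sq_eq_zero_of_mem hI hmem) n
  rw [add_sub_cancel, hst, left_eq_add] at h1
  exact sub_eq_zero.mp (((hnS.mul (htu.pow _)).mul_right_eq_zero).mp h1)

/-- An `n`-th root of a unit modulo a square-zero ideal lifts to an `n`-th root, if `n` is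
invertible. -/
lemma exists_pow_eq_of_sub_mem {S : Type*} [CommRing S] {I : Ideal S} (hI : I ^ 2 = ⊥)
    {n : ℕ} (hn : 0 < n) (hnS : IsUnit (n : S)) {x a : S} (ha : IsUnit a)
    (hx : x ^ n - a ∈ I) : ∃ s, s - x ∈ I ∧ s ^ n = a := by
  have hxu : IsUnit x := by
    refine (isUnit_pow_iff hn.ne').mp ?_
    have hnil : IsNilpotent (x ^ n - a) := ⟨2, sq_eq_zero_of_mem hI hx⟩
    simpa using hnil.isUnit_add_left_of_commute ha (Commute.all _ _)
  obtain ⟨v, hv⟩ := (hnS.mul (hxu.pow (n - 1))).exists_right_inv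
  have hmem : v * (a - x ^ n) ∈ I := I.mul_mem_left _ (by simpa using I.neg_mem hx)
  -- One Newton step from `x`: `v` is the inverse of the derivative `n * x ^ (n - 1)`.
  refine ⟨x + v * (a - x ^ n), by simpa using hmem, ?_⟩
  rw [add_pow_eq_of_sq_eq_zero _ _ (sq_eq_zero_of_mem hI hmem), ← mul_assoc, hv]
  ring

lemma formallyEtale_addMonoidAlgebra {k : Type u} [Field k] {B : Type u} [AddCommGroup B]
    (A : AddSubgroup B) (n : ℕ) (hn : 0 < n) (hnk : (n : k) ≠ 0) (hA : ∀ b : B, n • b ∈ A) :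
    letI : Algebra (AddMonoidAlgebra k A) (AddMonoidAlgebra k B) :=
      (AddMonoidAlgebra.mapDomainRingHom k A.subtype).toAlgebra
    Algebra.FormallyEtale (AddMonoidAlgebra k A) (AddMonoidAlgebra k B) := by
  letI : Algebra (AddMonoidAlgebra k A) (AddMonoidAlgebra k B) :=
    (AddMonoidAlgebra.mapDomainRingHom k A.subtype).toAlgebra
  have hmap (a : A) (r : k) : algebraMap (AddMonoidAlgebra k A) (AddMonoidAlgebra k B)
      (AddMonoidAlgebra.single a r) = AddMonoidAlgebra.single (a : B) r := by
    simp [RingHom.algebraMap_toAlgebra]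
  refine Algebra.FormallyEtale.iff_comp_bijective.mpr fun S _ _ I hI ↦ ?_
  let ι : k →+* S :=
    (algebraMap (AddMonoidAlgebra k A) S).comp AddMonoidAlgebra.singleZeroRingHom
  let α : A → S := fun a ↦ algebraMap (AddMonoidAlgebra k A) S (AddMonoidAlgebra.single a 1)
  have hι (r : k) : ι r = algebraMap (AddMonoidAlgebra k A) S (AddMonoidAlgebra.single 0 r) := rfl
  have hα_add (a b : A) : α (a + b) = α a * α b := by
    simp [α, ← map_mul, AddMonoidAlgebra.single_mul_single]
  have hα_zero : α 0 = 1 := by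
    simp [α, ← AddMonoidAlgebra.one_def]
  have hα_unit (a : A) : IsUnit (α a) :=
    IsUnit.of_mul_eq_one (α (-a)) (by rw [← hα_add, add_neg_cancel, hα_zero])
  have hα_nsmul (a : A) (m : ℕ) : α (m • a) = α a ^ m := by
    induction m with
    | zero => simp [hα_zero]
    | succ m ih => rw [succ_nsmul, hα_add, ih, pow_succ]
  have hnS : IsUnit (n : S) := by
    simpa using (Ne.isUnit hnk).map ι
  -- the `n`-th power of a monomial of `B` is a monomial of `A`
  have hpow (b : B) : (AddMonoidAlgebra.single b 1 : AddMonoidAlgebra k B) ^ n =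
      algebraMap (AddMonoidAlgebra k A) _ (AddMonoidAlgebra.single ⟨n • b, hA b⟩ 1) := by
    rw [hmap, AddMonoidAlgebra.single_pow, one_pow]
  constructor
  · intro g₁ g₂ h
    apply AlgHom.coe_ringHom_injective
    refine AddMonoidAlgebra.ringHom_ext (fun r ↦ ?_) (fun b ↦ ?_)
    · have := hmap 0 r
      rw [ZeroMemClass.coe_zero] at this
      simp only [← this, RingHom.coe_coe, AlgHom.commutes]
    · have hg (g : AddMonoidAlgebra k B →ₐ[AddMonoidAlgebra k A] S) :
          g (AddMonoidAlgebra.single b 1) ^ n = α ⟨n • b, hA b⟩ := by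
        rw [← map_pow, hpow, AlgHom.commutes]
      refine eq_of_pow_eq_of_sub_mem hI hn hnS (t := g₂ (AddMonoidAlgebra.single b 1)) ?_ ?_ ?_
      · rw [hg]; exact hα_unit _
      · exact (hg g₁).trans (hg g₂).symm
      · exact Ideal.Quotient.eq.mp (DFunLike.congr_fun h (AddMonoidAlgebra.single b 1))
  · intro f
    have hex (b : B) : ∃ s : S, Ideal.Quotient.mk I s = f (AddMonoidAlgebra.single b 1) ∧
        s ^ n = α ⟨n • b, hA b⟩ := by
      obtain ⟨x, hx⟩ := Ideal.Quotient.mk_surjective (f (AddMonoidAlgebra.single b 1))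
      obtain ⟨s, hs, hs'⟩ := exists_pow_eq_of_sub_mem hI hn hnS (x := x) (hα_unit ⟨n • b, hA b⟩) (by
        rw [← Ideal.Quotient.eq, map_pow, hx, ← map_pow, hpow, AlgHom.commutes]
        rfl)
      exact ⟨s, (Ideal.Quotient.eq.mpr hs).trans hx, hs'⟩
    choose e he hen using hex
    have he_unique (b : B) (s : S) (h1 : Ideal.Quotient.mk I s = f (AddMonoidAlgebra.single b 1))
        (h2 : s ^ n = α ⟨n • b, hA b⟩) : e b = s := by
      refine (eq_of_pow_eq_of_sub_mem hI hn hnS ?_ (h2.trans (hen b).symm) ?_).symm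
      · rw [hen]; exact hα_unit _
      · exact Ideal.Quotient.eq.mp (h1.trans (he b).symm)
    have he_coe (a : A) : e a = α a := by
      refine he_unique _ _ ?_ ?_
      · rw [← hmap, AlgHom.commutes]; rfl
      · rw [← hα_nsmul]; rfl
    have he_add (b c : B) : e (b + c) = e b * e c := by
      refine he_unique _ _ ?_ ?_
      · rw [map_mul, he, he, ← map_mul, AddMonoidAlgebra.single_mul_single, one_mul]
      · rw [mul_pow, hen, hen, ← hα_add]
        congr 1
        exact Subtype.ext (nsmul_add b c n).symm
    let E : Multiplicative B →* S :=
      { toFun := fun b ↦ e b.toAdd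
        map_one' := (he_coe 0).trans hα_zero
        map_mul' := fun b c ↦ he_add _ _ }
    let G : AddMonoidAlgebra k B →+* S :=
      AddMonoidAlgebra.liftNCRingHom ι E (fun _ _ ↦ Commute.all _ _)
    have hG (b : B) (r : k) : G (AddMonoidAlgebra.single b r) = ι r * e b :=
      AddMonoidAlgebra.liftNC_single _ _ _ _
    have hGalg : G.comp (algebraMap (AddMonoidAlgebra k A) (AddMonoidAlgebra k B)) =
        algebraMap (AddMonoidAlgebra k A) S := by
      refine AddMonoidAlgebra.ringHom_ext (fun r ↦ ?_) (fun a ↦ ?_)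
      · rw [RingHom.comp_apply, hmap, hG, he_coe, hα_zero, mul_one, hι]
      · rw [RingHom.comp_apply, hmap, hG, he_coe, map_one, one_mul]
    refine ⟨{ G with commutes' := fun r ↦ DFunLike.congr_fun hGalg r }, ?_⟩
    apply AlgHom.coe_ringHom_injective
    refine AddMonoidAlgebra.ringHom_ext (fun r ↦ ?_) (fun b ↦ ?_)
    · have := hmap 0 r
      rw [ZeroMemClass.coe_zero] at this
      simp only [← this, RingHom.coe_coe, AlgHom.commutes]
    · change Ideal.Quotient.mk I (G (AddMonoidAlgebra.single b 1)) = _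
      rw [hG, map_one, one_mul, he]
      rfl

/-- STATEMENT 9: if `B` is a finitely generated abelian group, `A ⊆ B` a subgroup
and `n` a positive integer invertible in the field `k` with `n • B ⊆ A`, then
`k[B]` is an étale `k[A]`-algebra. -/
theorem stmt_9 {k : Type u} [Field k] {B : Type u} [AddCommGroup B] [AddGroup.FG B]
    (A : AddSubgroup B) (n : ℕ) (hn : 0 < n) (hnk : (n : k) ≠ 0)
    (hA : ∀ b : B, n • b ∈ A) :
    letI : Algebra (AddMonoidAlgebra k A) (AddMonoidAlgebra k B) :=
      (AddMonoidAlgebra.mapDomainRingHom k A.subtype).toAlgebra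
    Algebra.Etale (AddMonoidAlgebra k A) (AddMonoidAlgebra k B) := by
  letI : Algebra (AddMonoidAlgebra k A) (AddMonoidAlgebra k B) :=
    (AddMonoidAlgebra.mapDomainRingHom k A.subtype).toAlgebra
  have : Module.Finite ℤ B := Module.Finite.iff_addGroup_fg.mpr inferInstance
  have : Module.Finite ℤ A :=
    inferInstanceAs (Module.Finite ℤ (AddSubgroup.toIntSubmodule A))
  have : AddGroup.FG A := Module.Finite.iff_addGroup_fg.mp this
  have : AddMonoid.FG A := AddGroup.fg_iff_addMonoid_fg.mp this
  have : AddMonoid.FG B := AddGroup.fg_iff_addMonoid_fg.mp inferInstance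
  have : IsNoetherianRing (AddMonoidAlgebra k A) :=
    Algebra.FiniteType.isNoetherianRing k _
  have : IsScalarTower k (AddMonoidAlgebra k A) (AddMonoidAlgebra k B) :=
    .of_algebraMap_eq fun r ↦ by simp [RingHom.algebraMap_toAlgebra]
  have : Algebra.FiniteType (AddMonoidAlgebra k A) (AddMonoidAlgebra k B) :=
    .of_restrictScalars_finiteType k _ _
  exact ⟨formallyEtale_addMonoidAlgebra A n hn hnk hA,
    Algebra.FinitePresentation.of_finiteType.mp this⟩
end

section
/- Let k be a commutative ring and G a commutative monoid (written additively) with a submonoid F such that for every g ∈ G there exists an integer n ≥ 1 with n•g ∈ F. Consider the monoid algebras k[F], k[G], k[F^{gp}], k[G^{gp}], where (·)^{gp} denotes the Grothendieck group, with ring homomorphisms induced by the inclusion F ⊆ G, the canonical maps F → F^{gp} and G → G^{gp}, and the induced map F^{gp} → G^{gp}. Then the commutative square with top row k[F] → k[F^{gp}], left column k[F] → k[G], right column k[F^{gp}] → k[G^{gp}], and bottom row k[G] → k[G^{gp}] is a pushout of commutative rings; equivalently, the canonical map k[G] ⊗_{k[F]} k[F^{gp}] → k[G^{gp}] is a ring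 isomorphism. -/
/-!
The square is shown to have the universal property of a pushout directly. Let `a : k[F^gp] → R` and
`b : k[G] → R` agree on `k[F]`. For `g : G`, some positive multiple `n • g` lies in `F`, so a
positive power of `b (X^g)` equals `a` of a monomial of `k[F^gp]`, hence is a unit; therefore
`b (X^g)` is itself a unit. The resulting homomorphism `G → Rˣ` extends to `G^gp`, and together with
the action of `b` on constants it defines the required map `k[G^gp] → R`. Both its compatibility
with `a` and its uniqueness follow from `ringHom_ext_of_univ`: a ring homomorphism out of the
algebra of a group completion is determined by its restriction to the algebra of the monoid.
-/

universe u

open CategoryTheory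

/-- The homomorphism `H → Rˣ`, `h ↦ f (X^h)`, attached to a ring homomorphism `f : k[H] → R` from a
group algebra. -/
noncomputable def unitsHom {k H R : Type u} [CommRing k] [AddCommGroup H] [CommRing R]
    (f : AddMonoidAlgebra k H →+* R) : H →+ Additive Rˣ :=
  MonoidHom.toAdditiveRight
    (((f : AddMonoidAlgebra k H →* R).comp (AddMonoidAlgebra.of k H)).toHomUnits)

lemma unitsHom_apply {k H R : Type u} [CommRing k] [AddCommGroup H] [CommRing R]
    (f : AddMonoidAlgebra k H →+* R) (h : H) :
    ((unitsHom f h).toMul : R) = f (AddMonoidAlgebra.single h 1) := rfl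

/-- A ring homomorphism from the group algebra of a group completion `ι : M → H` is determined by
its restriction along `k[M] → k[H]`: on monomials it is a homomorphism `H → Rˣ`, to which the
uniqueness in the universal property of `H` applies. -/
lemma ringHom_ext_of_univ {k M H R : Type u} [CommRing k] [AddCommMonoid M] [AddCommGroup H]
    [CommRing R] (ι : M →+ H)
    (huniv : ∀ (K : Type u) [AddCommGroup K] (f : M →+ K), ∃! φ : H →+ K, φ.comp ι = f)
    {f g : AddMonoidAlgebra k H →+* R}
    (hfg : f.comp (AddMonoidAlgebra.mapDomainRingHom k ι) =
      g.comp (AddMonoidAlgebra.mapDomainRingHom k ι)) : f = g := by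
  have key (m : M) (r : k) :
      f (AddMonoidAlgebra.single (ι m) r) = g (AddMonoidAlgebra.single (ι m) r) := by
    simpa using RingHom.congr_fun hfg (AddMonoidAlgebra.single m r)
  have hu : unitsHom f = unitsHom g := by
    refine (huniv _ ((unitsHom g).comp ι)).unique ?_ rfl
    ext m
    exact key m 1
  refine AddMonoidAlgebra.ringHom_ext (fun r => ?_) (fun h => ?_)
  · simpa using key 0 r
  · rw [← unitsHom_apply, ← unitsHom_apply, hu]

/-- Under the Kummer condition on `F`, a ring homomorphism `b` from `k[G]` whose restriction to
`k[F]` factors through the algebra of a group sends every monomial to a unit. -/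
lemma isUnit_of_kummer {k G FG R : Type u} [CommRing k] [AddCommMonoid G] [AddCommGroup FG]
    [CommRing R] (F : AddSubmonoid G) (hF : ∀ g : G, ∃ n : ℕ, 1 ≤ n ∧ n • g ∈ F) (ιF : F →+ FG)
    (a : AddMonoidAlgebra k FG →+* R) (b : AddMonoidAlgebra k G →+* R)
    (hab : a.comp (AddMonoidAlgebra.mapDomainRingHom k ιF) =
      b.comp (AddMonoidAlgebra.mapDomainRingHom k F.subtype)) (g : G) :
    IsUnit (b (AddMonoidAlgebra.single g 1)) := by
  obtain ⟨n, hn, hg⟩ := hF g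
  have h : a (AddMonoidAlgebra.single (ιF ⟨n • g, hg⟩) 1) = b (AddMonoidAlgebra.single g 1) ^ n := by
    rw [← map_pow, AddMonoidAlgebra.single_pow, one_pow]
    simpa using RingHom.congr_fun hab (AddMonoidAlgebra.single ⟨n • g, hg⟩ 1)
  rw [← isUnit_pow_iff (n := n) (by omega), ← h, ← unitsHom_apply]
  exact Units.isUnit _

/-- Existence half of the universal property of `k[M^gp]`: a ring homomorphism from `k[M]` that
sends monomials to units extends along `k[M] → k[M^gp]`. -/
lemma exists_extension {k M H R : Type u} [CommRing k] [AddCommMonoid M] [AddCommGroup H]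
    [CommRing R] (ι : M →+ H)
    (huniv : ∀ (K : Type u) [AddCommGroup K] (f : M →+ K), ∃! φ : H →+ K, φ.comp ι = f)
    (b : AddMonoidAlgebra k M →+* R)
    (hb : ∀ m : M, IsUnit (b (AddMonoidAlgebra.single m 1))) :
    ∃ c : AddMonoidAlgebra k H →+* R,
      c.comp (AddMonoidAlgebra.mapDomainRingHom k ι) = b := by
  let u : M →+ Additive Rˣ := MonoidHom.toAdditiveRight
    (IsUnit.liftRight ((b : AddMonoidAlgebra k M →* R).comp (AddMonoidAlgebra.of k M))
      (fun m => hb m.toAdd))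
  have hu (m : M) : ((u m).toMul : R) = b (AddMonoidAlgebra.single m 1) := rfl
  obtain ⟨φ, hφ, -⟩ := huniv _ u
  have hφ' (m : M) : φ (ι m) = u m := DFunLike.congr_fun hφ m
  refine ⟨AddMonoidAlgebra.liftNCRingHom (b.comp AddMonoidAlgebra.singleZeroRingHom)
    ((Units.coeHom R).comp (AddMonoidHom.toMultiplicativeLeft φ)) (fun _ _ => Commute.all _ _), ?_⟩
  refine AddMonoidAlgebra.ringHom_ext (fun r => ?_) (fun m => ?_)
  · simp [AddMonoidAlgebra.liftNCRingHom]
  · simp [AddMonoidAlgebra.liftNCRingHom, hφ', hu, ← AddMonoidAlgebra.one_def]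

/-- STATEMENT 11: for a Kummer submonoid `F` of a commutative monoid `G`, the square of
monoid algebras `k[F] → k[F^gp]`, `k[F] → k[G]`, `k[F^gp] → k[G^gp]`, `k[G] → k[G^gp]`
(Grothendieck groups characterized by their universal properties) is a pushout of
commutative rings. -/
theorem stmt_11 {k : Type u} [CommRing k] {G : Type u} [AddCommMonoid G]
    (F : AddSubmonoid G) (hF : ∀ g : G, ∃ n : ℕ, 1 ≤ n ∧ n • g ∈ F)
    {FG GG : Type u} [AddCommGroup FG] [AddCommGroup GG]
    (ιF : F →+ FG) (ιG : G →+ GG)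
    (hFuniv : ∀ (K : Type u) [AddCommGroup K] (f : F →+ K),
      ∃! φ : FG →+ K, φ.comp ιF = f)
    (hGuniv : ∀ (K : Type u) [AddCommGroup K] (f : G →+ K),
      ∃! φ : GG →+ K, φ.comp ιG = f)
    (θ : FG →+ GG) (hθ : θ.comp ιF = ιG.comp F.subtype) :
    IsPushout
      (CommRingCat.ofHom (AddMonoidAlgebra.mapDomainRingHom k ιF) :
        CommRingCat.of (AddMonoidAlgebra k F) ⟶ CommRingCat.of (AddMonoidAlgebra k FG))
      (CommRingCat.ofHom (AddMonoidAlgebra.mapDomainRingHom k F.subtype) :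
        CommRingCat.of (AddMonoidAlgebra k F) ⟶ CommRingCat.of (AddMonoidAlgebra k G))
      (CommRingCat.ofHom (AddMonoidAlgebra.mapDomainRingHom k θ) :
        CommRingCat.of (AddMonoidAlgebra k FG) ⟶ CommRingCat.of (AddMonoidAlgebra k GG))
      (CommRingCat.ofHom (AddMonoidAlgebra.mapDomainRingHom k ιG) :
        CommRingCat.of (AddMonoidAlgebra k G) ⟶ CommRingCat.of (AddMonoidAlgebra k GG)) := by
  have hcomm : (AddMonoidAlgebra.mapDomainRingHom k θ).comp
      (AddMonoidAlgebra.mapDomainRingHom k ιF) =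
      (AddMonoidAlgebra.mapDomainRingHom k ιG).comp
        (AddMonoidAlgebra.mapDomainRingHom k F.subtype) := by
    rw [← AddMonoidAlgebra.mapDomainRingHom_comp, hθ, AddMonoidAlgebra.mapDomainRingHom_comp]
  refine ⟨⟨?_⟩, ⟨Limits.PushoutCocone.isColimitAux' _ fun s => ?_⟩⟩
  · exact CommRingCat.hom_ext hcomm
  · have hab := congrArg CommRingCat.Hom.hom s.condition
    simp only [CommRingCat.hom_comp, CommRingCat.hom_ofHom] at hab
    have hex := exists_extension ιG hGuniv s.inr.hom
      (isUnit_of_kummer F hF ιF s.inl.hom s.inr.hom hab)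
    -- The universal property is data, so the extension is chosen rather than destructured.
    have hc := hex.choose_spec
    refine ⟨CommRingCat.ofHom hex.choose, ?_, ?_, fun {m} _ hm => ?_⟩
    · refine CommRingCat.hom_ext (ringHom_ext_of_univ ιF hFuniv ?_)
      refine Eq.trans ?_ hab.symm
      change (hex.choose.comp (AddMonoidAlgebra.mapDomainRingHom k θ)).comp _ = _
      rw [RingHom.comp_assoc, hcomm, ← RingHom.comp_assoc, hc]
    · exact CommRingCat.hom_ext hc
    · refine CommRingCat.hom_ext (ringHom_ext_of_univ ιG hGuniv ?_)
      exact (congrArg CommRingCat.Hom.hom hm).trans hc.symm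
end

section
/- Let k be a field, let P be a commutative monoid and Q a finitely generated commutative monoid (both written additively), and let φ : P → Q be a monoid homomorphism such that for every q ∈ Q there exists an integer n ≥ 1 with n•q ∈ φ(P). Let 𝔭 ⊆ P be an ideal of the monoid P (i.e. 𝔭 + P ⊆ 𝔭), and define 𝔭_Q = {q ∈ Q : there exist n ≥ 1 and p ∈ 𝔭 with n•q = φ(p)}. In the monoid algebra k[Q], let J₁ be the ideal generated by the monomials corresponding to the elements φ(p) for p ∈ 𝔭, and let J₂ be the ideal generated by the monomials corresponding to the elements of 𝔭_Q. Then J₁ ⊆ J₂ and there exists an integer N ≥ 1 with J₂^N ⊆ J₁; in particular the image of J₂ in k[Q]/J₁ is a nilpotent ideal. -/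
/-!
Each monomial generating `J₂` has a power among the generators of `J₁`: if `n • q = φ p`, the `n`-th power
of the monomial of `q` is the monomial of `φ p`. Hence `J₂` lies in the radical of `J₁`. Since `Q`
is finitely generated, `k[Q]` is Noetherian, so `J₂` is finitely generated and a power of it is
contained in `J₁`.
-/

set_option synthInstance.maxHeartbeats 1000000
set_option maxHeartbeats 1000000

/-- STATEMENT 12: for a Kummer morphism `φ : P → Q` into a finitely generated
commutative monoid, an ideal `𝔭` of `P`, and its saturation `𝔭_Q` in `Q`, the ideal of
`k[Q]` generated by the monomials from `𝔭_Q` has a power contained in the ideal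
generated by the monomials `φ(p)`, `p ∈ 𝔭`; in particular its image in the quotient is
nilpotent. -/
theorem stmt_12 {k : Type*} [Field k] {P Q : Type*} [AddCommMonoid P] [AddCommMonoid Q]
    [AddMonoid.FG Q] (φ : P →+ Q)
    (hkum : ∀ q : Q, ∃ n : ℕ, 1 ≤ n ∧ ∃ p : P, n • q = φ p)
    (𝔭 : Set P) (h𝔭 : ∀ p ∈ 𝔭, ∀ p' : P, p + p' ∈ 𝔭) :
    letI J₁ : Ideal (AddMonoidAlgebra k Q) :=
      Ideal.span {x | ∃ p ∈ 𝔭, x = AddMonoidAlgebra.single (φ p) (1 : k)}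
    letI J₂ : Ideal (AddMonoidAlgebra k Q) :=
      Ideal.span {x | ∃ q : Q, (∃ n : ℕ, 1 ≤ n ∧ ∃ p ∈ 𝔭, n • q = φ p) ∧
        x = AddMonoidAlgebra.single q (1 : k)}
    J₁ ≤ J₂ ∧ (∃ N : ℕ, 1 ≤ N ∧ J₂ ^ N ≤ J₁) ∧
      IsNilpotent (J₂.map (Ideal.Quotient.mk J₁)) := by
  set J₁ : Ideal (AddMonoidAlgebra k Q) :=
    Ideal.span {x | ∃ p ∈ 𝔭, x = AddMonoidAlgebra.single (φ p) (1 : k)}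
  set J₂ : Ideal (AddMonoidAlgebra k Q) :=
    Ideal.span {x | ∃ q : Q, (∃ n : ℕ, 1 ≤ n ∧ ∃ p ∈ 𝔭, n • q = φ p) ∧
      x = AddMonoidAlgebra.single q (1 : k)}
  have hle : J₁ ≤ J₂ := by
    refine Ideal.span_mono ?_
    rintro x ⟨p, hp, rfl⟩
    exact ⟨φ p, ⟨1, le_rfl, p, hp, one_nsmul _⟩, rfl⟩
  have hrad : J₂ ≤ J₁.radical := by
    refine Ideal.span_le.mpr ?_
    rintro x ⟨q, ⟨n, -, p, hp, hq⟩, rfl⟩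
    refine ⟨n, Ideal.subset_span ⟨p, hp, ?_⟩⟩
    rw [AddMonoidAlgebra.single_pow, one_pow, hq]
  -- `k[Q]` is of finite type over `k` because `Q` is finitely generated.
  haveI : IsNoetherianRing (AddMonoidAlgebra k Q) :=
    Algebra.FiniteType.isNoetherianRing k (AddMonoidAlgebra k Q)
  obtain ⟨N, hN⟩ := Ideal.exists_pow_le_of_le_radical_of_fg hrad (IsNoetherian.noetherian J₂)
  -- The exponent `N` may be `0`, so `N + 1` is used to have a positive one.
  have hN' : J₂ ^ (N + 1) ≤ J₁ := (Ideal.pow_le_pow_right N.le_succ).trans hN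
  refine ⟨hle, ⟨N + 1, N.succ_pos, hN'⟩, N + 1, ?_⟩
  rw [← Ideal.map_pow, Ideal.zero_eq_bot, Ideal.map_eq_bot_iff_le_ker, Ideal.mk_ker]
  exact hN'
end
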